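/- Let f(z) = z / (1 − z²/2) for z in the open unit disk 𝔻. Then f ∈ 𝒜, f satisfies z² f'(z)/f(z)² − 1 = z²/2 for all z ∈ 𝔻 \ {0}, and f is univalent in 𝔻. -/

import Mathlib

open Complex Set

/-!
The reciprocal of `f z = z / (1 - c * z ^ 2)` is `1 / z - c * z`, and
`z ^ 2 * f' z / f z ^ 2 = -z ^ 2 * (1 / f)' z`, so this quotient is `1 + c * z ^ 2`.
The equation `f z = f w` amounts to `(z - w) * (1 + c * (z * w)) = 0`, and for `‖c‖ ≤ 1` the second
factor has no zeros in the unit ball.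
-/

/-- The odd Koebe function `z ↦ z / (1 - z ^ 2)`, rotated and dilated by a parameter `c`: for
`c = a ^ 2 ≠ 0` it is `z ↦ k (a * z) / a` with `k` the case `c = 1`. -/
def oddKoebe {𝕜 : Type*} [Field 𝕜] (c : 𝕜) : 𝕜 → 𝕜 :=
  fun z => z / (1 - c * z ^ 2)

namespace oddKoebe

section Field

variable {𝕜 : Type*} [Field 𝕜] {c z w : 𝕜}

theorem apply_zero (c : 𝕜) : oddKoebe c 0 = 0 :=
  zero_div _

theorem apply_eq_apply_iff (hz : 1 - c * z ^ 2 ≠ 0) (hw : 1 - c * w ^ 2 ≠ 0) :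
    oddKoebe c z = oddKoebe c w ↔ z = w ∨ 1 + c * (z * w) = 0 := by
  have factor : z * (1 - c * w ^ 2) - w * (1 - c * z ^ 2) = (z - w) * (1 + c * (z * w)) := by
    ring
  rw [oddKoebe, oddKoebe, div_eq_div_iff hz hw, ← sub_eq_zero, factor, mul_eq_zero, sub_eq_zero]

end Field

section NormedField

variable {𝕜 : Type*} [NormedField 𝕜] {c z w : 𝕜}

theorem norm_mul_mul_lt_one (hc : ‖c‖ ≤ 1) (hz : z ∈ Metric.ball 0 1)
    (hw : w ∈ Metric.ball 0 1) : ‖c * (z * w)‖ < 1 := by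
  rw [mem_ball_zero_iff] at hz hw
  rw [norm_mul, norm_mul]
  exact mul_lt_one_of_nonneg_of_lt_one_right hc (by positivity)
    (mul_lt_one_of_nonneg_of_lt_one_left (norm_nonneg z) hz hw.le)

theorem one_add_mul_mul_ne_zero (hc : ‖c‖ ≤ 1) (hz : z ∈ Metric.ball 0 1)
    (hw : w ∈ Metric.ball 0 1) : 1 + c * (z * w) ≠ 0 := by
  intro h
  have hlt := norm_mul_mul_lt_one hc hz hw
  rw [eq_neg_of_add_eq_zero_right h, norm_neg, norm_one] at hlt
  exact hlt.false

theorem one_sub_mul_sq_ne_zero (hc : ‖c‖ ≤ 1) (hz : z ∈ Metric.ball 0 1) :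
    1 - c * z ^ 2 ≠ 0 := by
  have h : 1 + -c * (z * z) ≠ 0 := one_add_mul_mul_ne_zero (by rwa [norm_neg]) hz hz
  rwa [neg_mul, ← sub_eq_add_neg, ← sq] at h

theorem injOn_ball (hc : ‖c‖ ≤ 1) : InjOn (oddKoebe c) (Metric.ball 0 1) := by
  intro z hz w hw h
  rw [apply_eq_apply_iff (one_sub_mul_sq_ne_zero hc hz) (one_sub_mul_sq_ne_zero hc hw)] at h
  exact h.resolve_right (one_add_mul_mul_ne_zero hc hz hw)

end NormedField

section NontriviallyNormedField

variable {𝕜 : Type*} [NontriviallyNormedField 𝕜] {c z : 𝕜}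

theorem analyticAt (hz : 1 - c * z ^ 2 ≠ 0) : AnalyticAt 𝕜 (oddKoebe c) z :=
  analyticAt_id.div (by fun_prop) hz

theorem hasDerivAt (hz : 1 - c * z ^ 2 ≠ 0) :
    HasDerivAt (oddKoebe c) ((1 + c * z ^ 2) / (1 - c * z ^ 2) ^ 2) z := by
  have hden : HasDerivAt (fun z => 1 - c * z ^ 2) (-(c * (2 * z))) z := by
    simpa using ((hasDerivAt_pow 2 z).const_mul c).const_sub 1
  refine ((hasDerivAt_id z).div hden hz).congr_deriv ?_
  simp only [id]
  ring

theorem deriv_zero (c : 𝕜) : deriv (oddKoebe c) 0 = 1 := by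
  simpa using (hasDerivAt (c := c) (z := 0) (by simp)).deriv

theorem sq_mul_deriv_div_sq (hz₀ : z ≠ 0) (hz : 1 - c * z ^ 2 ≠ 0) :
    z ^ 2 * deriv (oddKoebe c) z / oddKoebe c z ^ 2 = 1 + c * z ^ 2 := by
  rw [(hasDerivAt hz).deriv, oddKoebe, div_pow, ← mul_div_assoc,
    div_div_div_cancel_right₀ (pow_ne_zero 2 hz), mul_div_cancel_left₀ _ (pow_ne_zero 2 hz₀)]

end NontriviallyNormedField

end oddKoebe

theorem stmt14_general {𝕜 : Type*} [NontriviallyNormedField 𝕜] {c : 𝕜} (hc : ‖c‖ ≤ 1) :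
    AnalyticOnNhd 𝕜 (oddKoebe c) (Metric.ball 0 1) ∧
    oddKoebe c 0 = 0 ∧
    deriv (oddKoebe c) 0 = 1 ∧
    (∀ z ∈ Metric.ball (0 : 𝕜) 1 \ {0},
      z ^ 2 * deriv (oddKoebe c) z / oddKoebe c z ^ 2 - 1 = c * z ^ 2) ∧
    InjOn (oddKoebe c) (Metric.ball 0 1) := by
  have hden {z : 𝕜} (hz : z ∈ Metric.ball 0 1) : 1 - c * z ^ 2 ≠ 0 :=
    oddKoebe.one_sub_mul_sq_ne_zero hc hz
  refine ⟨fun z hz => oddKoebe.analyticAt (hden hz), oddKoebe.apply_zero c, oddKoebe.deriv_zero c,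
    fun z ⟨hz, hz₀⟩ => ?_, oddKoebe.injOn_ball hc⟩
  rw [oddKoebe.sq_mul_deriv_div_sq hz₀ (hden hz), add_sub_cancel_left]

theorem stmt14 :
    AnalyticOnNhd ℂ (fun z : ℂ => z / (1 - z ^ 2 / 2)) (Metric.ball 0 1) ∧
    (fun z : ℂ => z / (1 - z ^ 2 / 2)) 0 = 0 ∧
    deriv (fun z : ℂ => z / (1 - z ^ 2 / 2)) 0 = 1 ∧
    (∀ z ∈ Metric.ball (0:ℂ) 1 \ {0},
      z ^ 2 * deriv (fun z : ℂ => z / (1 - z ^ 2 / 2)) z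
        / ((fun z : ℂ => z / (1 - z ^ 2 / 2)) z) ^ 2 - 1 = z ^ 2 / 2) ∧
    Set.InjOn (fun z : ℂ => z / (1 - z ^ 2 / 2)) (Metric.ball 0 1) := by
  simpa +unfoldPartialApp only [oddKoebe, div_eq_inv_mul] using
    stmt14_general (c := (2⁻¹ : ℂ)) (by norm_num)
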